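/- Let (ν₁, θ₁) and (ν₂, θ₂) be two pairs consisting of a σ-finite Borel measure on S_N quasi-invariant for the shift S and a measurable map S_N → 𝕋, with associated representations π_{ν₁,θ₁} and π_{ν₂,θ₂} of BS(1,N). These representations are unitarily equivalent if and only if ν₁ and ν₂ are mutually absolutely continuous and θ₁, θ₂ are cocycle equivalent, i.e., there exists a measurable function λ : S_N → 𝕋 such that λ·θ₁ = (λ∘S)·θ₂ ν₁-a.e. -/

import Mathlib

noncomputable section

open MeasureTheory Real Complex Filter Finset
open scoped ENNReal

/-! ### Basic instances for the circle -/

instance : MeasurableSpace Circle := borel Circle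
instance : BorelSpace Circle := ⟨rfl⟩

/-- The point `e^{-2πit}` of the unit circle. -/
def ee (t : ℝ) : Circle := Circle.exp (-(2 * π * t))

/-- Normalized Lebesgue measure on the circle, realized as the image of Lebesgue
measure on `[0,1)` under `t ↦ e^{-2πit}`. -/
def circleMeasure : Measure Circle := (volume.restrict (Set.Ico (0:ℝ) 1)).map ee

/-! ### The Baumslag–Solitar group `BS(1,N)` -/

/-- The single relation `u t u⁻¹ (t^N)⁻¹` defining `BS(1,N)`. -/
def BSRel (N : ℕ) : Set (FreeGroup Bool) :=
  {FreeGroup.of true * FreeGroup.of false * (FreeGroup.of true)⁻¹ * ((FreeGroup.of false) ^ N)⁻¹}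

/-- The Baumslag–Solitar group `BS(1,N) = ⟨u,t | u t u⁻¹ = t^N⟩`. -/
abbrev BS (N : ℕ) := PresentedGroup (BSRel N)

/-- The generator `u` of `BS(1,N)`. -/
def BS.u (N : ℕ) : BS N := PresentedGroup.of true

/-- The generator `t` of `BS(1,N)`. -/
def BS.t (N : ℕ) : BS N := PresentedGroup.of false

/-! ### The solenoid -/

/-- The `N`-solenoid, as a subgroup of the product of circles indexed by `ℤ`:
all sequences `(z_n)` with `z_{n+1}^N = z_n`. -/
def solenoidGroup (N : ℕ) : Subgroup (ℤ → Circle) where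
  carrier := {z | ∀ n : ℤ, z (n + 1) ^ N = z n}
  one_mem' := by intro n; simp
  mul_mem' := by
    intro a b ha hb n
    simp only [Set.mem_setOf_eq, Pi.mul_apply, mul_pow] at *
    rw [ha n, hb n]
  inv_mem' := by
    intro a ha n
    simp only [Set.mem_setOf_eq, Pi.inv_apply, inv_pow] at *
    rw [ha n]

/-- The `N`-solenoid as a type. -/
abbrev Solenoid (N : ℕ) := ↥(solenoidGroup N)

/-- The shift `S` on the solenoid: `(S z)_n = z_{n-1}`. -/
def shift (N : ℕ) (z : Solenoid N) : Solenoid N :=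
  ⟨fun n => z.val (n - 1), by
    intro n
    have h := z.property (n - 1)
    simpa using h⟩

/-- The inverse `S⁻¹` of the shift on the solenoid: `(S⁻¹ z)_n = z_{n+1}`. -/
def shiftInv (N : ℕ) (z : Solenoid N) : Solenoid N :=
  ⟨fun n => z.val (n + 1), fun n => z.property (n + 1)⟩

/-- Integer powers `Sⁿ` of the shift. -/
def shiftZ (N : ℕ) (n : ℤ) : Solenoid N → Solenoid N :=
  if 0 ≤ n then (shift N)^[n.toNat] else (shiftInv N)^[(-n).toNat]

/-- The measure `ν ∘ S`, defined by `(ν ∘ S)(E) = ν(S(E))`. -/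
def measShift (N : ℕ) (ν : Measure (Solenoid N)) : Measure (Solenoid N) :=
  ν.map (shiftInv N)

/-- `ν` is quasi-invariant for the shift `S`: `ν ∘ S` and `ν` are mutually
absolutely continuous. -/
def QuasiInvariant (N : ℕ) (ν : Measure (Solenoid N)) : Prop :=
  measShift N ν ≪ ν ∧ ν ≪ measShift N ν

/-- The shift `S` is ergodic with respect to `ν`. -/
def ShiftErgodic (N : ℕ) (ν : Measure (Solenoid N)) : Prop :=
  ∀ E : Set (Solenoid N), MeasurableSet E → shift N ⁻¹' E = E → ν E = 0 ∨ ν Eᶜ = 0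

/-- A bounded measurable (`L^∞`-type) function. -/
def BddMeasurable {α : Type*} [MeasurableSpace α] (f : α → ℂ) : Prop :=
  Measurable f ∧ ∃ C : ℝ, ∀ x, ‖f x‖ ≤ C

/-! ### The representation `π_{ν,θ}` -/

/-- The pair of unitaries `U, T` on `L²(ν)` given by
`Uξ = √Δ ⬝ θ ⬝ (ξ∘S)` (with `Δ = d(ν∘S)/dν`) and `(Tξ)(z) = z₀ ξ(z)`. -/
def IsPiNuTheta (N : ℕ) (ν : Measure (Solenoid N)) (θ : Solenoid N → Circle)
    (U T : unitary (Lp ℂ 2 ν →L[ℂ] Lp ℂ 2 ν)) : Prop :=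
  (∀ ξ : Lp ℂ 2 ν,
      (((U : Lp ℂ 2 ν →L[ℂ] Lp ℂ 2 ν) ξ : Lp ℂ 2 ν) : Solenoid N → ℂ) =ᵐ[ν]
        fun z => (Real.sqrt (((measShift N ν).rnDeriv ν z).toReal) : ℂ) * (θ z : ℂ) *
          (ξ : Solenoid N → ℂ) (shift N z)) ∧
  (∀ ξ : Lp ℂ 2 ν,
      (((T : Lp ℂ 2 ν →L[ℂ] Lp ℂ 2 ν) ξ : Lp ℂ 2 ν) : Solenoid N → ℂ) =ᵐ[ν]
        fun z => ((z.val 0 : Circle) : ℂ) * (ξ : Solenoid N → ℂ) z)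

/-- `φ` is a cyclic vector for the (unitary) representation generated by `U` and `T`:
the only closed subspace containing `φ` and invariant under the group generated by
`U` and `T` is the whole space. -/
def cyclicVector {H : Type*} [NormedAddCommGroup H] [InnerProductSpace ℂ H]
    [CompleteSpace H] (U T : unitary (H →L[ℂ] H)) (φ : H) : Prop :=
  ∀ K : Submodule ℂ H, IsClosed (K : Set H) → φ ∈ K →
    (∀ g ∈ Subgroup.closure ({U, T} : Set (unitary (H →L[ℂ] H))),
      ∀ v ∈ K, (g : H →L[ℂ] H) v ∈ K) → K = ⊤

/-! ### Filters and the Ruelle operator -/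

/-- The quadrature mirror filter condition `R_{m₀} 1 = 1`, written out on `[0,1)`:
`(1/N) ∑_{k<N} |m₀(e^{-2πi(x+k)/N})|² = 1` for a.e. `x`. -/
def QMF (N : ℕ) (m₀ : Circle → ℂ) : Prop :=
  ∀ᵐ x ∂(volume.restrict (Set.Ico (0:ℝ) 1)),
    (1 / N : ℝ) * ∑ k ∈ Finset.range N, ‖m₀ (ee ((x + k) / N))‖ ^ 2 = 1

/-- `h` is a fixed point of the Ruelle operator `R_{m₀}`:
`(1/N) ∑_{w^N = z} |m₀(w)|² h(w) = h(z)` for a.e. `z`, written out on `[0,1)`. -/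
def RuelleFixed (N : ℕ) (m₀ : Circle → ℂ) (h : Circle → ℂ) : Prop :=
  ∀ᵐ x ∂(volume.restrict (Set.Ico (0:ℝ) 1)),
    (1 / N : ℂ) * ∑ k ∈ Finset.range N,
        (‖m₀ (ee ((x + k) / N))‖ ^ 2 : ℝ) * h (ee ((x + k) / N)) = h (ee x)

/-- The wavelet representation of `BS(1,N)` associated to a filter `m₀`, realized
on `L²(m)` for a measure `m` on the solenoid: `Uξ = m₀ ⬝ (ξ∘S)` and `T` is
multiplication by the coordinate `z₀`. -/
def IsWaveletRepOn (N : ℕ) (m₀ : Circle → ℂ) (m : Measure (Solenoid N))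
    (U T : unitary (Lp ℂ 2 m →L[ℂ] Lp ℂ 2 m)) : Prop :=
  (∀ ξ : Lp ℂ 2 m,
      (((U : Lp ℂ 2 m →L[ℂ] Lp ℂ 2 m) ξ : Lp ℂ 2 m) : Solenoid N → ℂ) =ᵐ[m]
        fun z => m₀ (z.val 0) * (ξ : Solenoid N → ℂ) (shift N z)) ∧
  (∀ ξ : Lp ℂ 2 m,
      (((T : Lp ℂ 2 m →L[ℂ] Lp ℂ 2 m) ξ : Lp ℂ 2 m) : Solenoid N → ℂ) =ᵐ[m]
        fun z => ((z.val 0 : Circle) : ℂ) * (ξ : Solenoid N → ℂ) z)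

/-- The measure `m` on the solenoid associated to a weight `W` (with `N W = |m₀|²`):
its `z₀`-marginal is normalized Lebesgue measure on the circle, and
`d(m∘S)/dm = N W`. -/
def IsAssociatedMeasure (N : ℕ) (W : Circle → ℝ) (m : Measure (Solenoid N)) : Prop :=
  IsProbabilityMeasure m ∧
  m.map (fun z : Solenoid N => z.val 0) = circleMeasure ∧
  measShift N m = m.withDensity (fun z => ENNReal.ofReal (N * W (z.val 0)))

end

/-!
Multiplication by a shifted coordinate is determined by the two generators: `z ↦ z_n` is obtained
from `z ↦ z_0` by composing with powers of `S`, and `U` conjugates multiplication by `g` to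
multiplication by `g ∘ S`. Hence an intertwiner `W` of the two representations commutes with
multiplication by every character generated by the coordinates. Comparing the moments
`⟨ξ, g ξ⟩ = ⟨W ξ, g W ξ⟩` gives the equality of measures `|ξ|² ν₁ = |W ξ|² ν₂` for every `ξ`, since
finite measures are determined by their Fourier coefficients. This forces `ν₁` and `ν₂` to be
equivalent, and polarizing it shows that `W` is multiplication by `λ √(dν₁/dν₂)` for some
circle-valued `λ`. Conversely every such multiplication is unitary. By the chain rule for
Radon–Nikodym derivatives it intertwines the two operators `U` exactly when
`λ θ₁ = (λ ∘ S) θ₂`. The same argument applies to any automorphism that shifts a generating sequence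
of circle-valued functions.
-/

section FourierUniqueness

open MeasureTheory BoundedContinuousFunction

/-- Circle-valued continuous maps as bounded complex functions, bundled as a monoid homomorphism so
that subgroups of `C(Y, Circle)` span subalgebras of `Y →ᵇ ℂ`. -/
noncomputable def circleToBounded (Y : Type*) [TopologicalSpace Y] : C(Y, Circle) →* (Y →ᵇ ℂ) where
  toFun g := .ofNormedAddCommGroup (fun y => (g y : ℂ)) (by fun_prop) 1 fun y =>
    (Circle.norm_coe _).le
  map_one' := by ext; simp
  map_mul' f g := by ext; simp

lemma star_circleToBounded {Y : Type*} [TopologicalSpace Y] (g : C(Y, Circle)) :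
    star (circleToBounded Y g) = circleToBounded Y g⁻¹ := by
  ext y
  exact (Circle.coe_inv_eq_conj _).symm

lemma toSubmodule_adjoin_circleToBounded {Y : Type*} [TopologicalSpace Y]
    (G : Subgroup C(Y, Circle)) :
    Subalgebra.toSubmodule (StarAlgebra.adjoin ℂ (circleToBounded Y '' G)).toSubalgebra =
      Submodule.span ℂ (circleToBounded Y '' G) := by
  have star_mem : star (circleToBounded Y '' G) ⊆ circleToBounded Y '' G := by
    rintro f ⟨g, hg, hgf⟩
    exact ⟨g⁻¹, inv_mem hg, by rw [← star_circleToBounded, hgf, star_star]⟩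
  have closure_eq : (Submonoid.closure (circleToBounded Y '' G) : Set (Y →ᵇ ℂ)) =
      circleToBounded Y '' G :=
    congrArg SetLike.coe (Submonoid.closure_eq (G.toSubmonoid.map (circleToBounded Y)))
  rw [StarAlgebra.adjoin_eq_span, Set.union_eq_self_of_subset_right star_mem, closure_eq]

theorem measure_ext_of_separating_circle_subgroup {Y : Type*} [TopologicalSpace Y] [PolishSpace Y]
    [MeasurableSpace Y] [BorelSpace Y] {P Q : Measure Y} [IsFiniteMeasure P] [IsFiniteMeasure Q]
    (G : Subgroup C(Y, Circle)) (hsep : ∀ ⦃x y⦄, x ≠ y → ∃ g ∈ G, g x ≠ g y)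
    (h : ∀ g ∈ G, ∫ y, (g y : ℂ) ∂P = ∫ y, (g y : ℂ) ∂Q) : P = Q := by
  refine ext_of_forall_mem_subalgebra_integral_eq_of_polish
    (A := StarAlgebra.adjoin ℂ (circleToBounded Y '' G)) (fun x y hxy => ?_) fun f hf => ?_
  · obtain ⟨g, hg, hgxy⟩ := hsep hxy
    exact ⟨_, ⟨_, ⟨_, StarAlgebra.subset_adjoin ℂ _ ⟨g, hg, rfl⟩, rfl⟩, rfl⟩,
      Circle.coe_injective.ne hgxy⟩
  · have hf_span : f ∈ Submodule.span ℂ (circleToBounded Y '' G) := by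
      rwa [← toSubmodule_adjoin_circleToBounded]
    clear hf
    induction hf_span using Submodule.span_induction with
    | mem f hf =>
      obtain ⟨g, hg, rfl⟩ := hf
      exact h g hg
    | zero => simp
    | add f₁ f₂ _ _ h₁ h₂ =>
      simp only [BoundedContinuousFunction.add_apply]
      rw [integral_add (f₁.integrable P) (f₂.integrable P), h₁, h₂,
        integral_add (f₁.integrable Q) (f₂.integrable Q)]
    | smul c f _ hf => simp only [BoundedContinuousFunction.smul_apply, integral_smul, hf]

theorem measure_ext_of_generating_circle_subgroup {X ι : Type*} [Countable ι]
    [mX : MeasurableSpace X] {P Q : Measure X} [IsFiniteMeasure P] [IsFiniteMeasure Q]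
    {φ : ι → X → Circle}
    (hφ : ⨆ i, MeasurableSpace.comap (φ i) inferInstance = mX)
    (G : Subgroup (X → Circle)) (hφG : ∀ i, φ i ∈ G)
    (h : ∀ g ∈ G, ∫ x, (g x : ℂ) ∂P = ∫ x, (g x : ℂ) ∂Q) : P = Q := by
  let Φ : X → ι → Circle := fun x i => φ i x
  have comap_Φ : MeasurableSpace.comap Φ MeasurableSpace.pi = mX := by
    rw [MeasurableSpace.pi, MeasurableSpace.comap_iSup, ← hφ]
    simp only [MeasurableSpace.comap_comp, Φ, Function.comp_def]
  have hΦ : Measurable Φ := comap_Φ ▸ comap_measurable Φ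
  have map_eq : P.map Φ = Q.map Φ := by
    have : PolishSpace (ι → Circle) := {}
    let pullback : C(ι → Circle, Circle) →* (X → Circle) :=
      { toFun := fun g x => g (Φ x), map_one' := rfl, map_mul' := fun _ _ => rfl }
    refine measure_ext_of_separating_circle_subgroup (G.comap pullback) (fun x y hxy => ?_)
      fun g hg => ?_
    · obtain ⟨i, hi⟩ := Function.ne_iff.1 hxy
      exact ⟨⟨fun y => y i, continuous_apply i⟩, hφG i, hi⟩
    · have hg_meas : Continuous fun y => (g y : ℂ) := by fun_prop
      rw [integral_map hΦ.aemeasurable hg_meas.aestronglyMeasurable,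
        integral_map hΦ.aemeasurable hg_meas.aestronglyMeasurable]
      exact h _ hg
  ext s hs
  rw [← comap_Φ] at hs
  obtain ⟨t, ht, rfl⟩ := hs
  rw [← Measure.map_apply hΦ ht, map_eq, Measure.map_apply hΦ ht]

end FourierUniqueness

section SqrtRNDeriv

open MeasureTheory Measure

variable {X : Type*} [MeasurableSpace X]

/-- The square root of the Radon–Nikodym derivative `dμ/dν`, as a real function: multiplication by
it carries `L²(μ)` isometrically into `L²(ν)`. -/
noncomputable def sqrtRNDeriv (μ ν : Measure X) (x : X) : ℝ :=
  √(μ.rnDeriv ν x).toReal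

lemma measurable_sqrtRNDeriv (μ ν : Measure X) : Measurable (sqrtRNDeriv μ ν) :=
  (measurable_rnDeriv μ ν).ennreal_toReal.sqrt

variable {μ ν κ : Measure X} [SigmaFinite μ] [SigmaFinite ν]

lemma sqrtRNDeriv_pos (h : ν ≪ μ) : ∀ᵐ x ∂ν, 0 < sqrtRNDeriv μ ν x := by
  filter_upwards [rnDeriv_pos' h, rnDeriv_lt_top μ ν] with x hpos hlt
  exact Real.sqrt_pos.2 (ENNReal.toReal_pos hpos.ne' hlt.ne)

lemma sqrtRNDeriv_self (μ : Measure X) [SigmaFinite μ] : sqrtRNDeriv μ μ =ᵐ[μ] 1 := by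
  filter_upwards [rnDeriv_self μ] with x hx
  simp only [sqrtRNDeriv, hx, Pi.one_apply, ENNReal.toReal_one, Real.sqrt_one]

lemma sqrtRNDeriv_mul_sqrtRNDeriv [SigmaFinite κ] (h : μ ≪ ν) :
    sqrtRNDeriv μ ν * sqrtRNDeriv ν κ =ᵐ[κ] sqrtRNDeriv μ κ := by
  filter_upwards [rnDeriv_mul_rnDeriv (κ := κ) h] with x hx
  simp only [sqrtRNDeriv, Pi.mul_apply, ← hx, ENNReal.toReal_mul,
    Real.sqrt_mul ENNReal.toReal_nonneg]

lemma sqrtRNDeriv_map_symm (S : X ≃ᵐ X) (hS : QuasiMeasurePreserving S ν ν) :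
    sqrtRNDeriv (μ.map S.symm) (ν.map S.symm) =ᵐ[ν] sqrtRNDeriv μ ν ∘ S := by
  filter_upwards [hS.ae (S.symm.measurableEmbedding.rnDeriv_map μ ν)] with x hx
  simp only [sqrtRNDeriv, Function.comp_apply, ← hx, MeasurableEquiv.symm_apply_apply]

lemma sqrtRNDeriv_map_symm_mul_sqrtRNDeriv (S : X ≃ᵐ X) (hμ : QuasiMeasurePreserving S.symm μ μ)
    (hν : QuasiMeasurePreserving S ν ν) (h : μ ≪ ν) :
    sqrtRNDeriv (μ.map S.symm) μ * sqrtRNDeriv μ ν =ᵐ[ν]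
      (sqrtRNDeriv μ ν ∘ S) * sqrtRNDeriv (ν.map S.symm) ν := by
  have : SigmaFinite (μ.map S.symm) := S.symm.sigmaFinite_map
  have : SigmaFinite (ν.map S.symm) := S.symm.sigmaFinite_map
  calc sqrtRNDeriv (μ.map S.symm) μ * sqrtRNDeriv μ ν
    _ =ᵐ[ν] sqrtRNDeriv (μ.map S.symm) ν := sqrtRNDeriv_mul_sqrtRNDeriv hμ.absolutelyContinuous
    _ =ᵐ[ν] sqrtRNDeriv (μ.map S.symm) (ν.map S.symm) * sqrtRNDeriv (ν.map S.symm) ν :=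
      (sqrtRNDeriv_mul_sqrtRNDeriv (h.map S.symm.measurable)).symm
    _ =ᵐ[ν] (sqrtRNDeriv μ ν ∘ S) * sqrtRNDeriv (ν.map S.symm) ν :=
      (sqrtRNDeriv_map_symm S hν).mul .rfl

lemma enorm_sqrtRNDeriv_sq (μ ν : Measure X) [SigmaFinite μ] :
    ∀ᵐ x ∂ν, ‖(sqrtRNDeriv μ ν x : ℂ)‖ₑ ^ 2 = μ.rnDeriv ν x := by
  filter_upwards [rnDeriv_lt_top μ ν] with x hx
  rw [← ofReal_norm, Complex.norm_real, Real.norm_eq_abs, ← ENNReal.ofReal_pow (abs_nonneg _),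
    sq_abs, sqrtRNDeriv, Real.sq_sqrt ENNReal.toReal_nonneg, ENNReal.ofReal_toReal hx.ne]

lemma enorm_circle (z : Circle) : ‖(z : ℂ)‖ₑ = 1 := by
  rw [← ofReal_norm, Circle.norm_coe, ENNReal.ofReal_one]

lemma eLpNorm_circle_mul_sqrtRNDeriv_mul (h : μ ≪ ν) (l : X → Circle) {f : X → ℂ}
    (hf : AEStronglyMeasurable f ν) :
    eLpNorm (fun x => (l x : ℂ) * sqrtRNDeriv μ ν x * f x) 2 ν = eLpNorm f 2 μ := by
  rw [eLpNorm_eq_lintegral_rpow_enorm_toReal two_ne_zero ENNReal.ofNat_ne_top,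
    eLpNorm_eq_lintegral_rpow_enorm_toReal two_ne_zero ENNReal.ofNat_ne_top,
    ← lintegral_rnDeriv_mul h (hf.enorm.pow_const _)]
  congr 1
  refine lintegral_congr_ae ?_
  filter_upwards [enorm_sqrtRNDeriv_sq μ ν] with x hx
  simp only [enorm_mul, enorm_circle, ENNReal.toReal_ofNat, ENNReal.rpow_two, one_mul, mul_pow, hx]

end SqrtRNDeriv

section WeightedMul

open MeasureTheory

variable {X : Type*} [MeasurableSpace X] {μ ν : Measure X}

/-- `W : L²(μ) → L²(ν)` is multiplication by `l √(dμ/dν)`, the general form of an intertwiner of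
multiplication operators. -/
def IsWeightedMul (l : X → Circle) (W : Lp ℂ 2 μ → Lp ℂ 2 ν) : Prop :=
  ∀ ξ, W ξ =ᵐ[ν] fun x => (l x : ℂ) * sqrtRNDeriv μ ν x * ξ x

variable [SigmaFinite μ] [SigmaFinite ν]

lemma measurable_coe_circle {f : X → Circle} (hf : Measurable f) :
    Measurable fun x => (f x : ℂ) :=
  have : Continuous fun z : Circle => (z : ℂ) := by fun_prop
  this.measurable.comp hf

lemma memLp_circle_mul_sqrtRNDeriv_mul (hμν : μ ≪ ν) {l : X → Circle} (hl : Measurable l)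
    (ξ : Lp ℂ 2 μ) : MemLp (fun x => (l x : ℂ) * sqrtRNDeriv μ ν x * ξ x) 2 ν := by
  have hξ : Measurable ξ := (Lp.stronglyMeasurable ξ).measurable
  refine ⟨(((measurable_coe_circle hl).mul
    (Complex.measurable_ofReal.comp (measurable_sqrtRNDeriv μ ν))).mul hξ).aestronglyMeasurable, ?_⟩
  rw [eLpNorm_circle_mul_sqrtRNDeriv_mul hμν l hξ.aestronglyMeasurable]
  exact Lp.eLpNorm_lt_top ξ

/-- Multiplication by `l √(dμ/dν)` as a linear isometry from `L²(μ)` to `L²(ν)`. -/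
noncomputable def weightedMul (hμν : μ ≪ ν) (hνμ : ν ≪ μ) {l : X → Circle} (hl : Measurable l) :
    Lp ℂ 2 μ →ₗᵢ[ℂ] Lp ℂ 2 ν where
  toFun ξ := (memLp_circle_mul_sqrtRNDeriv_mul hμν hl ξ).toLp
  map_add' ξ η := by
    rw [← MemLp.toLp_add, MemLp.toLp_eq_toLp_iff]
    filter_upwards [hνμ.ae_le (Lp.coeFn_add ξ η)] with x hx
    rw [hx, Pi.add_apply, Pi.add_apply, mul_add]
  map_smul' c ξ := by
    rw [RingHom.id_apply, ← MemLp.toLp_const_smul, MemLp.toLp_eq_toLp_iff]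
    filter_upwards [hνμ.ae_le (Lp.coeFn_smul c ξ)] with x hx
    rw [hx, Pi.smul_apply, Pi.smul_apply, mul_smul_comm]
  norm_map' ξ := by
    change ‖(memLp_circle_mul_sqrtRNDeriv_mul hμν hl ξ).toLp‖ = ‖ξ‖
    rw [Lp.norm_toLp, Lp.norm_def, eLpNorm_circle_mul_sqrtRNDeriv_mul hμν l
      (Lp.stronglyMeasurable ξ).aestronglyMeasurable]

lemma isWeightedMul_weightedMul (hμν : μ ≪ ν) (hνμ : ν ≪ μ) {l : X → Circle} (hl : Measurable l) :
    IsWeightedMul l (weightedMul hμν hνμ hl) :=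
  fun ξ => (memLp_circle_mul_sqrtRNDeriv_mul hμν hl ξ).coeFn_toLp

lemma weightedMul_weightedMul_inv (hμν : μ ≪ ν) (hνμ : ν ≪ μ) {l : X → Circle} (hl : Measurable l)
    (η : Lp ℂ 2 ν) : weightedMul hμν hνμ hl (weightedMul hνμ hμν hl.inv η) = η := by
  apply Lp.ext
  filter_upwards [isWeightedMul_weightedMul hμν hνμ hl (weightedMul hνμ hμν hl.inv η),
    hνμ.ae_le (isWeightedMul_weightedMul hνμ hμν hl.inv η),
    sqrtRNDeriv_mul_sqrtRNDeriv (κ := ν) hνμ, sqrtRNDeriv_self ν] with x hW hV hmul hself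
  have hweight : (sqrtRNDeriv ν μ x : ℂ) * sqrtRNDeriv μ ν x = 1 := by
    exact_mod_cast hmul.trans hself
  have hphase : (l x : ℂ) * (l⁻¹ x : Circle) = 1 := by
    rw [Pi.inv_apply, ← Circle.coe_mul, mul_inv_cancel, Circle.coe_one]
  rw [hW, hV]
  linear_combination η x * (hweight + sqrtRNDeriv μ ν x * sqrtRNDeriv ν μ x * hphase)

theorem exists_linearIsometryEquiv_isWeightedMul (hμν : μ ≪ ν) (hνμ : ν ≪ μ) {l : X → Circle}
    (hl : Measurable l) : ∃ W : Lp ℂ 2 μ ≃ₗᵢ[ℂ] Lp ℂ 2 ν, IsWeightedMul l W :=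
  ⟨.ofSurjective (weightedMul hμν hνμ hl) fun η => ⟨_, weightedMul_weightedMul_inv hμν hνμ hl η⟩,
    isWeightedMul_weightedMul hμν hνμ hl⟩

end WeightedMul

section Intertwining

open MeasureTheory Measure
open scoped ENNReal

variable {X : Type*} [mX : MeasurableSpace X] {p : ℝ≥0∞} {μ ν : Measure X}

lemma exists_Lp_ae_eq_circle_mul {g : X → Circle} (hg : Measurable g) (ξ : Lp ℂ p μ) :
    ∃ ξ' : Lp ℂ p μ, ξ' =ᵐ[μ] fun x => g x * ξ x := by
  have hmem : MemLp (fun x => (g x : ℂ) * ξ x) p μ :=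
    (Lp.memLp ξ).congr_norm
      ((measurable_coe_circle hg).aestronglyMeasurable.mul (Lp.aestronglyMeasurable ξ))
      (.of_forall fun x => by rw [norm_mul, Circle.norm_coe, one_mul])
  exact ⟨hmem.toLp, hmem.coeFn_toLp⟩

/-- The measurable circle-valued functions whose multiplication operators on `Lᵖ(μ)` and `Lᵖ(ν)` are
intertwined by `W`. Multiplication is encoded by `ξ' = g ξ` almost everywhere. -/
def intertwinedSubgroup (W : Lp ℂ p μ → Lp ℂ p ν) : Subgroup (X → Circle) where
  carrier := {g | Measurable g ∧
    ∀ ξ ξ' : Lp ℂ p μ, (ξ' =ᵐ[μ] fun x => g x * ξ x) → W ξ' =ᵐ[ν] fun x => g x * W ξ x}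
  one_mem' := by
    refine ⟨measurable_one, fun ξ ξ' h => ?_⟩
    simp only [Pi.one_apply, Circle.coe_one, one_mul] at h ⊢
    rw [Lp.ext h]
  mul_mem' := by
    rintro g₁ g₂ ⟨hg₁, h₁⟩ ⟨hg₂, h₂⟩
    refine ⟨hg₁.mul hg₂, fun ξ ξ' h => ?_⟩
    obtain ⟨η, hη⟩ := exists_Lp_ae_eq_circle_mul hg₂ ξ
    have hξ' : ξ' =ᵐ[μ] fun x => g₁ x * η x := by
      filter_upwards [h, hη] with x hx hηx
      rw [hx, hηx, Pi.mul_apply, Circle.coe_mul, mul_assoc]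
    filter_upwards [h₁ η ξ' hξ', h₂ ξ η hη] with x hx hηx
    rw [hx, hηx, Pi.mul_apply, Circle.coe_mul, mul_assoc]
  inv_mem' := by
    rintro g ⟨hg, h⟩
    refine ⟨hg.inv, fun ξ ξ' hξ => ?_⟩
    have hξ' : ξ =ᵐ[μ] fun x => g x * ξ' x := by
      filter_upwards [hξ] with x hx
      rw [hx, Pi.inv_apply, Circle.coe_inv, mul_inv_cancel_left₀ (Circle.coe_ne_zero _)]
    filter_upwards [h ξ' ξ hξ'] with x hx
    rw [hx, Pi.inv_apply, Circle.coe_inv, inv_mul_cancel_left₀ (Circle.coe_ne_zero _)]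

lemma mem_intertwinedSubgroup {W : Lp ℂ p μ → Lp ℂ p ν} {g : X → Circle} :
    g ∈ intertwinedSubgroup W ↔ Measurable g ∧
      ∀ ξ ξ' : Lp ℂ p μ, (ξ' =ᵐ[μ] fun x => g x * ξ x) → W ξ' =ᵐ[ν] fun x => g x * W ξ x :=
  .rfl

lemma mem_intertwinedSubgroup_iff_commute {W : Lp ℂ p μ → Lp ℂ p ν} {g : X → Circle}
    (hg : Measurable g) {T₁ : Lp ℂ p μ → Lp ℂ p μ} {T₂ : Lp ℂ p ν → Lp ℂ p ν}
    (hT₁ : ∀ ξ, T₁ ξ =ᵐ[μ] fun x => g x * ξ x) (hT₂ : ∀ η, T₂ η =ᵐ[ν] fun x => g x * η x) :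
    g ∈ intertwinedSubgroup W ↔ ∀ ξ, W (T₁ ξ) = T₂ (W ξ) := by
  refine ⟨fun h ξ => Lp.ext ((h.2 ξ _ (hT₁ ξ)).trans (hT₂ (W ξ)).symm), fun h => ⟨hg, ?_⟩⟩
  intro ξ ξ' hξ'
  obtain rfl : ξ' = T₁ ξ := Lp.ext (hξ'.trans (hT₁ ξ).symm)
  rw [h]
  exact hT₂ (W ξ)

lemma IsWeightedMul.mem_intertwinedSubgroup {W : Lp ℂ 2 μ → Lp ℂ 2 ν} {l : X → Circle}
    (hW : IsWeightedMul l W) (hνμ : ν ≪ μ) {g : X → Circle} (hg : Measurable g) :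
    g ∈ intertwinedSubgroup W := by
  refine ⟨hg, fun ξ ξ' h => ?_⟩
  filter_upwards [hW ξ, hW ξ', hνμ.ae_le h] with x hx hx' hgx
  rw [hx, hx', hgx]
  ring

lemma measurable_enorm_sq (ξ : Lp ℂ 2 μ) : Measurable fun x => ‖ξ x‖ₑ ^ 2 :=
  (Lp.stronglyMeasurable ξ).measurable.enorm.pow_const 2

instance isFiniteMeasure_withDensity_enorm_sq (ξ : Lp ℂ 2 μ) :
    IsFiniteMeasure (μ.withDensity fun x => ‖ξ x‖ₑ ^ 2) := by
  refine isFiniteMeasure_withDensity ?_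
  simpa using (lintegral_rpow_enorm_lt_top_of_eLpNorm_lt_top two_ne_zero ENNReal.ofNat_ne_top
    (Lp.eLpNorm_lt_top ξ)).ne

lemma integral_withDensity_enorm_sq {g : X → ℂ} {ξ ξ' : Lp ℂ 2 μ}
    (h : ξ' =ᵐ[μ] fun x => g x * ξ x) :
    ∫ x, g x ∂(μ.withDensity fun x => ‖ξ x‖ₑ ^ 2) = inner ℂ ξ ξ' := by
  rw [integral_withDensity_eq_integral_toReal_smul (measurable_enorm_sq ξ)
    (.of_forall fun x => ENNReal.pow_lt_top enorm_lt_top), L2.inner_def]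
  refine integral_congr_ae ?_
  filter_upwards [h] with x hx
  rw [hx, RCLike.inner_apply, mul_assoc, Complex.mul_conj, Complex.normSq_eq_norm_sq,
    ENNReal.toReal_pow, toReal_enorm, Complex.real_smul, mul_comm]

theorem withDensity_enorm_sq_eq_of_intertwined {ι : Type*} [Countable ι] {φ : ι → X → Circle}
    (hφ : ⨆ i, MeasurableSpace.comap (φ i) inferInstance = mX) {W : Lp ℂ 2 μ →ₗᵢ[ℂ] Lp ℂ 2 ν}
    (hW : ∀ i, φ i ∈ intertwinedSubgroup W) (ξ : Lp ℂ 2 μ) :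
    μ.withDensity (fun x => ‖ξ x‖ₑ ^ 2) = ν.withDensity (fun x => ‖W ξ x‖ₑ ^ 2) := by
  refine measure_ext_of_generating_circle_subgroup hφ (intertwinedSubgroup W) hW fun g hg => ?_
  obtain ⟨ξ', hξ'⟩ := exists_Lp_ae_eq_circle_mul hg.1 ξ
  rw [integral_withDensity_enorm_sq hξ', integral_withDensity_enorm_sq (hg.2 ξ ξ' hξ'),
    W.inner_map_map]

end Intertwining

section Structure

open MeasureTheory Measure
open scoped ComplexConjugate

variable {X : Type*} [MeasurableSpace X] {μ ν : Measure X}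

lemma exists_Lp_two_ae_ne_zero (μ : Measure X) [SigmaFinite μ] :
    ∃ ξ : Lp ℂ 2 μ, ∀ᵐ x ∂μ, ξ x ≠ 0 := by
  obtain ⟨g, hpos, hg, hlt⟩ := exists_pos_lintegral_lt_of_sigmaFinite μ one_ne_zero
  have hsqrt : Measurable fun x => (√(g x) : ℂ) :=
    Complex.measurable_ofReal.comp hg.coe_nnreal_real.sqrt
  have hmem : MemLp (fun x => (√(g x) : ℂ)) 2 μ := by
    rw [memLp_two_iff_integrable_sq_norm hsqrt.aestronglyMeasurable]
    simp only [Complex.norm_real, Real.norm_eq_abs, sq_abs, Real.sq_sqrt NNReal.zero_le_coe]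
    refine ⟨hg.coe_nnreal_real.aestronglyMeasurable, ?_⟩
    simpa [hasFiniteIntegral_iff_enorm] using hlt.trans ENNReal.one_lt_top
  refine ⟨hmem.toLp, ?_⟩
  filter_upwards [hmem.coeFn_toLp] with x hx
  rw [hx, Complex.ofReal_ne_zero]
  exact (Real.sqrt_pos.2 (hpos x)).ne'

lemma absolutelyContinuous_of_forall_exists_withDensity_eq [SigmaFinite μ]
    (h : ∀ ξ : Lp ℂ 2 μ, ∃ η : Lp ℂ 2 ν,
      μ.withDensity (fun x => ‖ξ x‖ₑ ^ 2) = ν.withDensity (fun x => ‖η x‖ₑ ^ 2)) : μ ≪ ν := by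
  obtain ⟨ξ, hξ⟩ := exists_Lp_two_ae_ne_zero μ
  obtain ⟨η, hη⟩ := h ξ
  have hμ : μ ≪ μ.withDensity fun x => ‖ξ x‖ₑ ^ 2 := by
    refine withDensity_absolutelyContinuous' (measurable_enorm_sq ξ).aemeasurable ?_
    filter_upwards [hξ] with x hx
    exact pow_ne_zero 2 (enorm_ne_zero.2 hx)
  rw [hη] at hμ
  exact hμ.trans (withDensity_absolutelyContinuous ν _)

variable [SigmaFinite μ] [SigmaFinite ν]

lemma ae_toReal_rnDeriv_mul_norm_sq_eq (hμν : μ ≪ ν) {f g : X → ℂ} (hf : Measurable f)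
    (hg : Measurable g)
    (h : μ.withDensity (fun x => ‖f x‖ₑ ^ 2) = ν.withDensity (fun x => ‖g x‖ₑ ^ 2)) :
    ∀ᵐ x ∂ν, (μ.rnDeriv ν x).toReal * ‖f x‖ ^ 2 = ‖g x‖ ^ 2 := by
  have hr := measurable_rnDeriv μ ν
  have hf_sq : Measurable fun x => ‖f x‖ₑ ^ 2 := hf.enorm.pow_const 2
  rw [← withDensity_rnDeriv_eq μ ν hμν, ← withDensity_mul ν hr hf_sq,
    withDensity_eq_iff_of_sigmaFinite (hr.mul hf_sq).aemeasurable
      (hg.enorm.pow_const 2).aemeasurable] at h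
  filter_upwards [h] with x hx
  simpa using congrArg ENNReal.toReal hx

lemma mul_inner_eq_inner_of_forall_norm_sq {E F : Type*} [NormedAddCommGroup E]
    [InnerProductSpace ℂ E] [NormedAddCommGroup F] [InnerProductSpace ℂ F] {r : ℝ} {a b : E}
    {c d : F} (h : ∀ u ∈ ({1, -1, Complex.I, -Complex.I} : Set ℂ),
      r * ‖a + u • b‖ ^ 2 = ‖c + u • d‖ ^ 2) : r * inner ℂ a b = inner ℂ c d := by
  have h_add := h 1 (by simp)
  have h_sub := h (-1) (by simp)
  have h_add_I := h Complex.I (by simp)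
  have h_sub_I := h (-Complex.I) (by simp)
  simp only [one_smul, neg_smul, ← sub_eq_add_neg] at h_add h_sub h_add_I h_sub_I
  rw [inner_eq_sum_norm_sq_div_four, inner_eq_sum_norm_sq_div_four]
  simp only [RCLike.I_to_complex, Complex.coe_algebraMap, ← Complex.ofReal_pow, ← h_add, ← h_sub,
    ← h_add_I, ← h_sub_I]
  push_cast
  ring

lemma ae_toReal_rnDeriv_mul_inner_eq (hμν : μ ≪ ν) (hνμ : ν ≪ μ) {W : Lp ℂ 2 μ →ₗ[ℂ] Lp ℂ 2 ν}
    (hW : ∀ ξ : Lp ℂ 2 μ,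
      μ.withDensity (fun x => ‖ξ x‖ₑ ^ 2) = ν.withDensity (fun x => ‖W ξ x‖ₑ ^ 2))
    (ξ η : Lp ℂ 2 μ) :
    ∀ᵐ x ∂ν, ((μ.rnDeriv ν x).toReal : ℂ) * inner ℂ (ξ x) (η x) = inner ℂ (W ξ x) (W η x) := by
  have norm_sq_eq (u : ℂ) : ∀ᵐ x ∂ν,
      (μ.rnDeriv ν x).toReal * ‖ξ x + u • η x‖ ^ 2 = ‖W ξ x + u • W η x‖ ^ 2 := by
    have h := ae_toReal_rnDeriv_mul_norm_sq_eq hμν (Lp.stronglyMeasurable _).measurable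
      (Lp.stronglyMeasurable _).measurable (hW (ξ + u • η))
    rw [map_add, map_smul] at h
    filter_upwards [h, hνμ.ae_le (Lp.coeFn_add ξ (u • η)), hνμ.ae_le (Lp.coeFn_smul u η),
      Lp.coeFn_add (W ξ) (u • W η), Lp.coeFn_smul u (W η)] with x hx add₁ smul₁ add₂ smul₂
    rwa [add₁, add₂, Pi.add_apply, Pi.add_apply, smul₁, smul₂] at hx
  have norm_sq_eq_all : ∀ᵐ x ∂ν, ∀ u ∈ ({1, -1, Complex.I, -Complex.I} : Set ℂ),
      (μ.rnDeriv ν x).toReal * ‖ξ x + u • η x‖ ^ 2 = ‖W ξ x + u • W η x‖ ^ 2 :=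
    (ae_ball_iff (Set.toFinite _).countable).2 fun u _ => norm_sq_eq u
  filter_upwards [norm_sq_eq_all] with x hx
  exact mul_inner_eq_inner_of_forall_norm_sq hx

/-- The phase `z / |z|`, with the junk value `1` at `z = 0`. -/
noncomputable def circlePhase (z : ℂ) : Circle :=
  Circle.exp z.arg

lemma norm_mul_circlePhase (z : ℂ) : ‖z‖ * (circlePhase z : ℂ) = z := by
  rw [circlePhase, Circle.coe_exp, Complex.norm_mul_exp_arg_mul_I]

lemma measurable_circlePhase : Measurable circlePhase :=
  Circle.exp.continuous.measurable.comp Complex.measurable_arg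

lemma eq_circlePhase_mul_sqrt_mul {r : ℝ} (hr : 0 < r) {a b c d : ℂ} (ha : a ≠ 0)
    (hnorm : r * ‖a‖ ^ 2 = ‖c‖ ^ 2) (hinner : r * inner ℂ a b = inner ℂ c d) :
    d = circlePhase (c / a) * √r * b := by
  have norm_div : ‖c / a‖ = √r := by
    rw [norm_div, eq_comm, Real.sqrt_eq_iff_eq_sq hr.le (by positivity), div_pow, ← hnorm,
      mul_div_cancel_right₀ _ (pow_ne_zero 2 (norm_ne_zero_iff.2 ha))]
  have hnorm' : r * (a * conj a) = c * conj c := by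
    rw [Complex.mul_conj', Complex.mul_conj']
    exact_mod_cast hnorm
  rw [RCLike.inner_apply, RCLike.inner_apply] at hinner
  have had : a * d = c * b := by
    refine mul_left_cancel₀ (mul_ne_zero (Complex.ofReal_ne_zero.2 hr.ne')
      ((map_ne_zero (starRingEnd ℂ)).2 ha)) ?_
    linear_combination d * hnorm' - c * hinner
  calc d
    _ = c / a * b := by rw [div_mul_eq_mul_div, eq_div_iff ha, mul_comm, had]
    _ = circlePhase (c / a) * √r * b := by
      rw [← norm_div, mul_comm (circlePhase _ : ℂ), norm_mul_circlePhase]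

theorem exists_isWeightedMul_of_forall_withDensity_eq (hμν : μ ≪ ν) (hνμ : ν ≪ μ)
    {W : Lp ℂ 2 μ →ₗ[ℂ] Lp ℂ 2 ν}
    (hW : ∀ ξ : Lp ℂ 2 μ,
      μ.withDensity (fun x => ‖ξ x‖ₑ ^ 2) = ν.withDensity (fun x => ‖W ξ x‖ₑ ^ 2)) :
    ∃ l : X → Circle, Measurable l ∧ IsWeightedMul l W := by
  obtain ⟨ξ₀, hξ₀⟩ := exists_Lp_two_ae_ne_zero μ
  have hξ₀_meas : Measurable ξ₀ := (Lp.stronglyMeasurable ξ₀).measurable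
  have hWξ₀_meas : Measurable (W ξ₀) := (Lp.stronglyMeasurable (W ξ₀)).measurable
  refine ⟨fun x => circlePhase (W ξ₀ x / ξ₀ x),
    measurable_circlePhase.comp (hWξ₀_meas.div hξ₀_meas), fun η => ?_⟩
  filter_upwards [hνμ.ae_le hξ₀, rnDeriv_pos' hνμ, rnDeriv_lt_top μ ν,
    ae_toReal_rnDeriv_mul_norm_sq_eq hμν hξ₀_meas hWξ₀_meas (hW ξ₀),
    ae_toReal_rnDeriv_mul_inner_eq hμν hνμ hW ξ₀ η] with x hne hpos hlt hnorm hinner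
  exact eq_circlePhase_mul_sqrt_mul (ENNReal.toReal_pos hpos.ne' hlt.ne) hne hnorm hinner

end Structure

section WeightedKoopman

open MeasureTheory Measure Filter

variable {X : Type*} [mX : MeasurableSpace X] {S : X ≃ᵐ X} {μ ν : Measure X}

/-- `U` is the weighted Koopman operator `U ξ = √Δ · θ · (ξ ∘ S)` on `L²(ν)`. The measure `ν ∘ S` is
encoded as the image of `ν` under `S⁻¹`, so that `Δ = d(ν ∘ S)/dν`. -/
def IsWeightedKoopman (S : X ≃ᵐ X) (θ : X → Circle) (U : Lp ℂ 2 ν → Lp ℂ 2 ν) : Prop :=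
  ∀ ξ, U ξ =ᵐ[ν] fun x => sqrtRNDeriv (ν.map S.symm) ν x * (θ x : ℂ) * ξ (S x)

lemma sqrtRNDeriv_map_symm_pos [SigmaFinite ν] (hS : QuasiMeasurePreserving S ν ν) :
    ∀ᵐ x ∂ν, 0 < sqrtRNDeriv (ν.map S.symm) ν x := by
  have : SigmaFinite (ν.map S.symm) := S.symm.sigmaFinite_map
  refine sqrtRNDeriv_pos ?_
  simpa only [S.map_symm_map] using hS.absolutelyContinuous.map S.symm.measurable

lemma IsWeightedKoopman.ae_eq_circle_mul_iff [SigmaFinite ν] {θ : X → Circle}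
    {U : Lp ℂ 2 ν → Lp ℂ 2 ν} (hU : IsWeightedKoopman S θ U)
    (hS : QuasiMeasurePreserving S ν ν) (hS' : QuasiMeasurePreserving S.symm ν ν)
    {g : X → Circle} (ξ ξ' : Lp ℂ 2 ν) :
    (U ξ' =ᵐ[ν] fun x => g (S x) * U ξ x) ↔ ξ' =ᵐ[ν] fun x => g x * ξ x := by
  have comp_shift : (U ξ' =ᵐ[ν] fun x => g (S x) * U ξ x) ↔
      ∀ᵐ x ∂ν, ξ' (S x) = g (S x) * ξ (S x) := by
    refine eventually_congr ?_
    filter_upwards [hU ξ, hU ξ', sqrtRNDeriv_map_symm_pos hS] with x hx hx' hpos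
    rw [hx, hx', mul_left_comm,
      mul_right_inj' (mul_ne_zero (Complex.ofReal_ne_zero.2 hpos.ne') (Circle.coe_ne_zero _))]
  refine comp_shift.trans ⟨fun h => ?_, fun h => hS.ae h⟩
  filter_upwards [hS'.ae h] with x hx
  simpa only [S.apply_symm_apply] using hx

lemma comp_mem_intertwinedSubgroup_iff [SigmaFinite μ] [SigmaFinite ν] {θ₁ θ₂ : X → Circle}
    {U₁ : Lp ℂ 2 μ → Lp ℂ 2 μ} {U₂ : Lp ℂ 2 ν → Lp ℂ 2 ν} {W : Lp ℂ 2 μ → Lp ℂ 2 ν}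
    (hμ : QuasiMeasurePreserving S μ μ) (hμ' : QuasiMeasurePreserving S.symm μ μ)
    (hν : QuasiMeasurePreserving S ν ν) (hν' : QuasiMeasurePreserving S.symm ν ν)
    (hU₁ : IsWeightedKoopman S θ₁ U₁) (hU₂ : IsWeightedKoopman S θ₂ U₂)
    (hsurj : Function.Surjective U₁) (hW : ∀ ξ, W (U₁ ξ) = U₂ (W ξ)) {g : X → Circle} :
    g ∘ S ∈ intertwinedSubgroup W ↔ g ∈ intertwinedSubgroup W := by
  rw [mem_intertwinedSubgroup, mem_intertwinedSubgroup, S.measurable_comp_iff, hsurj.forall₂]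
  simp only [hW, Function.comp_apply, hU₁.ae_eq_circle_mul_iff hμ hμ',
    hU₂.ae_eq_circle_mul_iff hν hν']

lemma forall_mem_of_comp_mem_iff {α β : Type*} {f : α → α} {A : Set (α → β)} {φ : ℤ → α → β}
    (hφ : ∀ n, φ n ∘ f = φ (n - 1)) (hA : ∀ g, g ∘ f ∈ A ↔ g ∈ A) (h : φ 0 ∈ A) (n : ℤ) :
    φ n ∈ A := by
  induction n with
  | zero => exact h
  | succ n ih => rwa [← hA, hφ, add_sub_cancel_right]
  | pred n ih => rwa [← hφ, hA]

variable [SigmaFinite μ] [SigmaFinite ν] {θ₁ θ₂ : X → Circle} {U₁ : Lp ℂ 2 μ → Lp ℂ 2 μ}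
  {U₂ : Lp ℂ 2 ν → Lp ℂ 2 ν} {W : Lp ℂ 2 μ → Lp ℂ 2 ν} {l : X → Circle}

lemma IsWeightedMul.map_koopman_eq_iff (hW : IsWeightedMul l W)
    (hμ : QuasiMeasurePreserving S μ μ) (hμ' : QuasiMeasurePreserving S.symm μ μ)
    (hν : QuasiMeasurePreserving S ν ν) (hμν : μ ≪ ν) (hνμ : ν ≪ μ)
    (hU₁ : IsWeightedKoopman S θ₁ U₁) (hU₂ : IsWeightedKoopman S θ₂ U₂) (ξ : Lp ℂ 2 μ) :
    W (U₁ ξ) = U₂ (W ξ) ↔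
      ∀ᵐ x ∂ν, (l x * θ₁ x : ℂ) * ξ (S x) = (l (S x) * θ₂ x : ℂ) * ξ (S x) := by
  rw [Lp.ext_iff]
  refine eventually_congr ?_
  filter_upwards [hW (U₁ ξ), hνμ.ae_le (hU₁ ξ), hU₂ (W ξ), hν.ae (hW ξ), sqrtRNDeriv_pos hνμ,
    hνμ.ae_le (sqrtRNDeriv_map_symm_pos hμ), sqrtRNDeriv_map_symm_mul_sqrtRNDeriv S hμ' hν hμν]
    with x hWU hU₁x hU₂x hWS hpos hpos' hcocycle
  set c : ℂ := sqrtRNDeriv (μ.map S.symm) μ x * sqrtRNDeriv μ ν x with hc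
  have hc_ne : c ≠ 0 := by
    rw [hc]
    exact_mod_cast (mul_pos hpos' hpos).ne'
  have hc' : c = sqrtRNDeriv μ ν (S x) * sqrtRNDeriv (ν.map S.symm) ν x := by
    rw [hc]
    exact_mod_cast hcocycle
  have hleft : W (U₁ ξ) x = c * (l x * θ₁ x * ξ (S x)) := by
    rw [hWU, hU₁x]
    ring
  have hright : U₂ (W ξ) x = c * (l (S x) * θ₂ x * ξ (S x)) := by
    rw [hU₂x, hWS, hc']
    ring
  rw [hleft, hright, mul_right_inj' hc_ne]

theorem IsWeightedMul.forall_map_koopman_eq_iff (hW : IsWeightedMul l W)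
    (hμ : QuasiMeasurePreserving S μ μ) (hμ' : QuasiMeasurePreserving S.symm μ μ)
    (hν : QuasiMeasurePreserving S ν ν) (hμν : μ ≪ ν) (hνμ : ν ≪ μ)
    (hU₁ : IsWeightedKoopman S θ₁ U₁) (hU₂ : IsWeightedKoopman S θ₂ U₂) :
    (∀ ξ, W (U₁ ξ) = U₂ (W ξ)) ↔
      (fun x => (l x * θ₁ x : ℂ)) =ᵐ[μ] fun x => (l (S x) * θ₂ x : ℂ) := by
  simp only [hW.map_koopman_eq_iff hμ hμ' hν hμν hνμ hU₁ hU₂]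
  refine ⟨fun h => ?_, fun h ξ => ?_⟩
  · obtain ⟨ξ₀, hξ₀⟩ := exists_Lp_two_ae_ne_zero μ
    filter_upwards [hμν.ae_le (h ξ₀), hμ.ae hξ₀] with x hx hne
    exact mul_right_cancel₀ hne hx
  · filter_upwards [hνμ.ae_le h] with x hx
    rw [hx]

end WeightedKoopman

section General

open MeasureTheory Measure

variable {X : Type*} [mX : MeasurableSpace X] {ν₁ ν₂ : Measure X} [SigmaFinite ν₁] [SigmaFinite ν₂]

theorem exists_isWeightedMul_of_intertwined {ι : Type*} [Countable ι] {φ : ι → X → Circle}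
    (hφ : ⨆ i, MeasurableSpace.comap (φ i) inferInstance = mX) {W : Lp ℂ 2 ν₁ ≃ₗᵢ[ℂ] Lp ℂ 2 ν₂}
    (hW : ∀ i, φ i ∈ intertwinedSubgroup W) :
    (ν₁ ≪ ν₂ ∧ ν₂ ≪ ν₁) ∧ ∃ l : X → Circle, Measurable l ∧ IsWeightedMul l W := by
  have hdensity := withDensity_enorm_sq_eq_of_intertwined hφ (W := W.toLinearIsometry) hW
  have h₁₂ : ν₁ ≪ ν₂ :=
    absolutelyContinuous_of_forall_exists_withDensity_eq fun ξ => ⟨_, hdensity ξ⟩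
  have h₂₁ : ν₂ ≪ ν₁ := absolutelyContinuous_of_forall_exists_withDensity_eq fun η =>
    ⟨W.symm η, by simpa using (hdensity (W.symm η)).symm⟩
  exact ⟨⟨h₁₂, h₂₁⟩,
    exists_isWeightedMul_of_forall_withDensity_eq (W := W.toLinearIsometry.toLinearMap) h₁₂ h₂₁
      hdensity⟩

theorem statement_3_general {S : X ≃ᵐ X} {φ : ℤ → X → Circle}
    (hφ : ⨆ n, MeasurableSpace.comap (φ n) inferInstance = mX) (hφS : ∀ n, φ n ∘ S = φ (n - 1))
    (hS₁ : QuasiMeasurePreserving S ν₁ ν₁) (hS₁' : QuasiMeasurePreserving S.symm ν₁ ν₁)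
    (hS₂ : QuasiMeasurePreserving S ν₂ ν₂) (hS₂' : QuasiMeasurePreserving S.symm ν₂ ν₂)
    {θ₁ θ₂ : X → Circle} {U₁ T₁ : unitary (Lp ℂ 2 ν₁ →L[ℂ] Lp ℂ 2 ν₁)}
    {U₂ T₂ : unitary (Lp ℂ 2 ν₂ →L[ℂ] Lp ℂ 2 ν₂)}
    (hU₁ : IsWeightedKoopman S θ₁ (U₁ : Lp ℂ 2 ν₁ →L[ℂ] Lp ℂ 2 ν₁))
    (hT₁ : ∀ ξ, (T₁ : Lp ℂ 2 ν₁ →L[ℂ] Lp ℂ 2 ν₁) ξ =ᵐ[ν₁] fun x => φ 0 x * ξ x)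
    (hU₂ : IsWeightedKoopman S θ₂ (U₂ : Lp ℂ 2 ν₂ →L[ℂ] Lp ℂ 2 ν₂))
    (hT₂ : ∀ ξ, (T₂ : Lp ℂ 2 ν₂ →L[ℂ] Lp ℂ 2 ν₂) ξ =ᵐ[ν₂] fun x => φ 0 x * ξ x) :
    (∃ W : Lp ℂ 2 ν₁ ≃ₗᵢ[ℂ] Lp ℂ 2 ν₂,
      (∀ ξ, W ((U₁ : Lp ℂ 2 ν₁ →L[ℂ] Lp ℂ 2 ν₁) ξ) = (U₂ : Lp ℂ 2 ν₂ →L[ℂ] Lp ℂ 2 ν₂) (W ξ)) ∧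
      ∀ ξ, W ((T₁ : Lp ℂ 2 ν₁ →L[ℂ] Lp ℂ 2 ν₁) ξ) = (T₂ : Lp ℂ 2 ν₂ →L[ℂ] Lp ℂ 2 ν₂) (W ξ)) ↔
    (ν₁ ≪ ν₂ ∧ ν₂ ≪ ν₁) ∧ ∃ l : X → Circle, Measurable l ∧
      (fun x => (l x * θ₁ x : ℂ)) =ᵐ[ν₁] fun x => (l (S x) * θ₂ x : ℂ) := by
  have hφ₀ : Measurable (φ 0) :=
    measurable_iff_comap_le.2 (hφ ▸ le_iSup (fun n => MeasurableSpace.comap (φ n) inferInstance) 0)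
  constructor
  · rintro ⟨W, hWU, hWT⟩
    have hU₁_surj : Function.Surjective (U₁ : Lp ℂ 2 ν₁ →L[ℂ] Lp ℂ 2 ν₁) :=
      (Unitary.linearIsometryEquiv U₁).surjective
    have hφW : ∀ n, φ n ∈ intertwinedSubgroup W :=
      forall_mem_of_comp_mem_iff (A := intertwinedSubgroup W) hφS
        (fun _ => comp_mem_intertwinedSubgroup_iff hS₁ hS₁' hS₂ hS₂' hU₁ hU₂ hU₁_surj hWU)
        ((mem_intertwinedSubgroup_iff_commute hφ₀ hT₁ hT₂).2 hWT)
    obtain ⟨hac, l, hl, hWl⟩ := exists_isWeightedMul_of_intertwined hφ hφW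
    exact ⟨hac, l, hl,
      (hWl.forall_map_koopman_eq_iff hS₁ hS₁' hS₂ hac.1 hac.2 hU₁ hU₂).1 hWU⟩
  · rintro ⟨⟨h₁₂, h₂₁⟩, l, hl, hcocycle⟩
    obtain ⟨W, hWl⟩ := exists_linearIsometryEquiv_isWeightedMul h₁₂ h₂₁ hl
    exact ⟨W, (hWl.forall_map_koopman_eq_iff hS₁ hS₁' hS₂ h₁₂ h₂₁ hU₁ hU₂).2 hcocycle,
      (mem_intertwinedSubgroup_iff_commute hφ₀ hT₁ hT₂).1 (hWl.mem_intertwinedSubgroup h₂₁ hφ₀)⟩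

end General

section SolenoidShift

open MeasureTheory Measure

variable (N : ℕ)

lemma measurable_coord (n : ℤ) : Measurable fun z : Solenoid N => z.val n :=
  (measurable_pi_apply n).comp measurable_subtype_coe

lemma iSup_comap_coord :
    ⨆ n : ℤ, MeasurableSpace.comap (fun z : Solenoid N => z.val n) inferInstance =
      (inferInstance : MeasurableSpace (Solenoid N)) := by
  change _ = MeasurableSpace.comap Subtype.val MeasurableSpace.pi
  simp only [MeasurableSpace.pi, MeasurableSpace.comap_iSup, MeasurableSpace.comap_comp,
    Function.comp_def]

/-- The shift of the solenoid as a measurable automorphism, with inverse `shiftInv`. -/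
def shiftEquiv : Solenoid N ≃ᵐ Solenoid N where
  toFun := shift N
  invFun := shiftInv N
  left_inv z := by ext n; simp [shift, shiftInv]
  right_inv z := by ext n; simp [shift, shiftInv]
  measurable_toFun := (measurable_pi_lambda _ fun n => measurable_coord N (n - 1)).subtype_mk
  measurable_invFun := (measurable_pi_lambda _ fun n => measurable_coord N (n + 1)).subtype_mk

variable {N} {ν : Measure (Solenoid N)}

lemma QuasiInvariant.quasiMeasurePreserving_shiftEquiv (h : QuasiInvariant N ν) :
    QuasiMeasurePreserving (shiftEquiv N) ν ν := by
  refine ⟨(shiftEquiv N).measurable, ?_⟩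
  have map_shift_measShift : (measShift N ν).map (shiftEquiv N) = ν :=
    (shiftEquiv N).map_map_symm
  simpa only [map_shift_measShift] using h.2.map (shiftEquiv N).measurable

lemma QuasiInvariant.quasiMeasurePreserving_shiftEquiv_symm (h : QuasiInvariant N ν) :
    QuasiMeasurePreserving (shiftEquiv N).symm ν ν :=
  ⟨(shiftEquiv N).symm.measurable, h.1⟩

end SolenoidShift

open MeasureTheory Real Complex Filter Finset in
/-- Proposition 2.3. Two representations `π_{ν₁,θ₁}` and
`π_{ν₂,θ₂}` are unitarily equivalent if and only if `ν₁` and `ν₂` are mutually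
absolutely continuous and `θ₁`, `θ₂` are cocycle equivalent:
`λ·θ₁ = (λ∘S)·θ₂` `ν₁`-a.e. for some measurable `λ : S_N → 𝕋`. -/
theorem statement_3 (N : ℕ) (hN : 2 ≤ N)
    (ν₁ ν₂ : Measure (Solenoid N)) [SigmaFinite ν₁] [SigmaFinite ν₂]
    (hqi₁ : QuasiInvariant N ν₁) (hqi₂ : QuasiInvariant N ν₂)
    (θ₁ θ₂ : Solenoid N → Circle) (hθ₁ : Measurable θ₁) (hθ₂ : Measurable θ₂)
    (U₁ T₁ : unitary (Lp ℂ 2 ν₁ →L[ℂ] Lp ℂ 2 ν₁))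
    (U₂ T₂ : unitary (Lp ℂ 2 ν₂ →L[ℂ] Lp ℂ 2 ν₂))
    (h₁ : IsPiNuTheta N ν₁ θ₁ U₁ T₁) (h₂ : IsPiNuTheta N ν₂ θ₂ U₂ T₂) :
    (∃ W : Lp ℂ 2 ν₁ ≃ₗᵢ[ℂ] Lp ℂ 2 ν₂,
      (∀ ξ : Lp ℂ 2 ν₁,
        W ((U₁ : Lp ℂ 2 ν₁ →L[ℂ] Lp ℂ 2 ν₁) ξ) = (U₂ : Lp ℂ 2 ν₂ →L[ℂ] Lp ℂ 2 ν₂) (W ξ)) ∧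
      (∀ ξ : Lp ℂ 2 ν₁,
        W ((T₁ : Lp ℂ 2 ν₁ →L[ℂ] Lp ℂ 2 ν₁) ξ) = (T₂ : Lp ℂ 2 ν₂ →L[ℂ] Lp ℂ 2 ν₂) (W ξ))) ↔
    ((ν₁ ≪ ν₂ ∧ ν₂ ≪ ν₁) ∧
      ∃ lam : Solenoid N → Circle, Measurable lam ∧
        (fun z => ((lam z : Circle) : ℂ) * ((θ₁ z : Circle) : ℂ)) =ᵐ[ν₁]
          fun z => ((lam (shift N z) : Circle) : ℂ) * ((θ₂ z : Circle) : ℂ)) := by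
  exact statement_3_general (S := shiftEquiv N) (φ := fun n z => z.val n) (iSup_comap_coord N)
    (fun _ => rfl) hqi₁.quasiMeasurePreserving_shiftEquiv
    hqi₁.quasiMeasurePreserving_shiftEquiv_symm hqi₂.quasiMeasurePreserving_shiftEquiv
    hqi₂.quasiMeasurePreserving_shiftEquiv_symm h₁.1 h₁.2 h₂.1 h₂.2
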